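/- arXiv:1801.05722 — 5 statements merged into one kernel-verified Lean document; each statement's English description precedes it below -/
import Mathlib

section
/- Let the notation be as in the context. Then a vector (x,y) in F^{a0+ainf} (x in F^{a0}, y in F^{ainf}) lies in ker(f0) ∩ ker(fbar0) if and only if x = 0 and B1·y = 0; a vector (x,y) in F^{a1+a0} lies in ker(f1) ∩ ker(fbar1) if and only if x = 0 and Binf·y = 0; and a vector (x,y) in F^{ainf+a1} lies in ker(finf) ∩ ker(fbarinf) if and only if x = 0 and B0·y = 0. Consequently dim(ker f0 ∩ ker fbar0) = ainf − r1, dim(ker f1 ∩ ker fbar1) = a0 − rinf, and dim(ker finf ∩ ker fbarinf) = a1 − r0. -/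
set_option maxHeartbeats 1600000

open Matrix Module
open scoped Kronecker

abbrev F2 : Type := ZMod 2

/-- A splicing datum: the algebraic data extracted from the knot Floer homology of a knot
in a homology sphere, as in Eftekhary's splicing formula. -/
structure SplicingDatum where
  a0 : ℕ
  a1 : ℕ
  ainf : ℕ
  A0 : Matrix (Fin ainf) (Fin ainf) F2
  B0 : Matrix (Fin ainf) (Fin a1) F2
  C0 : Matrix (Fin a1) (Fin ainf) F2
  D0 : Matrix (Fin a1) (Fin a1) F2
  A1 : Matrix (Fin a0) (Fin a0) F2
  B1 : Matrix (Fin a0) (Fin ainf) F2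
  C1 : Matrix (Fin ainf) (Fin a0) F2
  D1 : Matrix (Fin ainf) (Fin ainf) F2
  Ainf : Matrix (Fin a1) (Fin a1) F2
  Binf : Matrix (Fin a1) (Fin a0) F2
  Cinf : Matrix (Fin a0) (Fin a1) F2
  Dinf : Matrix (Fin a0) (Fin a0) F2
  C0inv : Matrix (Fin a1) (Fin ainf) F2
  C1inv : Matrix (Fin ainf) (Fin a0) F2
  Cinfinv : Matrix (Fin a0) (Fin a1) F2
  inv0_left : Matrix.fromBlocks A0 B0 C0 D0 * Matrix.fromBlocks A0 B0 C0inv D0 = 1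
  inv0_right : Matrix.fromBlocks A0 B0 C0inv D0 * Matrix.fromBlocks A0 B0 C0 D0 = 1
  inv1_left : Matrix.fromBlocks A1 B1 C1 D1 * Matrix.fromBlocks A1 B1 C1inv D1 = 1
  inv1_right : Matrix.fromBlocks A1 B1 C1inv D1 * Matrix.fromBlocks A1 B1 C1 D1 = 1
  invinf_left : Matrix.fromBlocks Ainf Binf Cinf Dinf * Matrix.fromBlocks Ainf Binf Cinfinv Dinf = 1
  invinf_right : Matrix.fromBlocks Ainf Binf Cinfinv Dinf * Matrix.fromBlocks Ainf Binf Cinf Dinf = 1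
  comm0 : A0 * B0 + B0 * D0 = 0
  comm1 : A1 * B1 + B1 * D1 = 0
  comminf : Ainf * Binf + Binf * Dinf = 0
  sq0 : B1 * B0 * Binf * (B1 * B0 * Binf) = 0
  sq1 : Binf * B1 * B0 * (Binf * B1 * B0) = 0
  sqinf : B0 * Binf * B1 * (B0 * Binf * B1) = 0

/-- dimension of the kernel of the linear map induced by a matrix -/
noncomputable def kdim {m n : Type*} [Fintype n] (M : Matrix m n F2) : ℕ :=
  finrank F2 ↥(LinearMap.ker M.mulVecLin)

/-- dimension of the cokernel of the linear map induced by a matrix -/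
noncomputable def cdim {m n : Type*} [Fintype n] (M : Matrix m n F2) : ℕ :=
  finrank F2 ((m → F2) ⧸ LinearMap.range M.mulVecLin)

/-- tensor product of two vectors, as a vector indexed by the product type -/
def tensVec {m n : Type*} (x : m → F2) (y : n → F2) : m × n → F2 :=
  fun p => x p.1 * y p.2

namespace SplicingDatum

variable (d : SplicingDatum)

def X0M : Matrix (Fin d.a0) (Fin d.a0) F2 := d.B1 * d.B0 * d.Binf
def X1M : Matrix (Fin d.a1) (Fin d.a1) F2 := d.Binf * d.B1 * d.B0
def XinfM : Matrix (Fin d.ainf) (Fin d.ainf) F2 := d.B0 * d.Binf * d.B1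

def tau0 : Matrix (Fin d.ainf ⊕ Fin d.a1) (Fin d.ainf ⊕ Fin d.a1) F2 :=
  Matrix.fromBlocks d.A0 d.B0 d.C0 d.D0
def tau0inv : Matrix (Fin d.ainf ⊕ Fin d.a1) (Fin d.ainf ⊕ Fin d.a1) F2 :=
  Matrix.fromBlocks d.A0 d.B0 d.C0inv d.D0
def tau1 : Matrix (Fin d.a0 ⊕ Fin d.ainf) (Fin d.a0 ⊕ Fin d.ainf) F2 :=
  Matrix.fromBlocks d.A1 d.B1 d.C1 d.D1
def tau1inv : Matrix (Fin d.a0 ⊕ Fin d.ainf) (Fin d.a0 ⊕ Fin d.ainf) F2 :=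
  Matrix.fromBlocks d.A1 d.B1 d.C1inv d.D1
def tauinf : Matrix (Fin d.a1 ⊕ Fin d.a0) (Fin d.a1 ⊕ Fin d.a0) F2 :=
  Matrix.fromBlocks d.Ainf d.Binf d.Cinf d.Dinf
def tauinfinv : Matrix (Fin d.a1 ⊕ Fin d.a0) (Fin d.a1 ⊕ Fin d.a0) F2 :=
  Matrix.fromBlocks d.Ainf d.Binf d.Cinfinv d.Dinf

/-- the map `finf : F^{ainf+a1} → F^{a0+ainf}` -/
def finfM : Matrix (Fin d.a0 ⊕ Fin d.ainf) (Fin d.ainf ⊕ Fin d.a1) F2 :=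
  Matrix.fromBlocks 0 0 (1 : Matrix (Fin d.ainf) (Fin d.ainf) F2) 0
/-- the map `f0 : F^{a0+ainf} → F^{a1+a0}` -/
def f0M : Matrix (Fin d.a1 ⊕ Fin d.a0) (Fin d.a0 ⊕ Fin d.ainf) F2 :=
  Matrix.fromBlocks 0 0 (1 : Matrix (Fin d.a0) (Fin d.a0) F2) 0
/-- the map `f1 : F^{a1+a0} → F^{ainf+a1}` -/
def f1M : Matrix (Fin d.ainf ⊕ Fin d.a1) (Fin d.a1 ⊕ Fin d.a0) F2 :=
  Matrix.fromBlocks 0 0 (1 : Matrix (Fin d.a1) (Fin d.a1) F2) 0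

def fbarinfM : Matrix (Fin d.a0 ⊕ Fin d.ainf) (Fin d.ainf ⊕ Fin d.a1) F2 :=
  d.tau1inv * d.finfM * d.tau0
def fbar0M : Matrix (Fin d.a1 ⊕ Fin d.a0) (Fin d.a0 ⊕ Fin d.ainf) F2 :=
  d.tauinfinv * d.f0M * d.tau1
def fbar1M : Matrix (Fin d.ainf ⊕ Fin d.a1) (Fin d.a1 ⊕ Fin d.a0) F2 :=
  d.tau0inv * d.f1M * d.tauinf

noncomputable def r0 : ℕ := d.B0.rank
noncomputable def r1 : ℕ := d.B1.rank
noncomputable def rinf : ℕ := d.Binf.rank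

noncomputable def k0 : ℕ :=
  finrank F2 ↥(LinearMap.ker d.f0M.mulVecLin ⊓ LinearMap.ker d.fbar0M.mulVecLin)
noncomputable def k1 : ℕ :=
  finrank F2 ↥(LinearMap.ker d.f1M.mulVecLin ⊓ LinearMap.ker d.fbar1M.mulVecLin)
noncomputable def kinf : ℕ :=
  finrank F2 ↥(LinearMap.ker d.finfM.mulVecLin ⊓ LinearMap.ker d.fbarinfM.mulVecLin)

noncomputable def l0 : ℕ :=
  finrank F2 ↥(LinearMap.ker (d.f0M + d.fbar0M).mulVecLin) - d.k0
noncomputable def l1 : ℕ :=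
  finrank F2 ↥(LinearMap.ker (d.f1M + d.fbar1M).mulVecLin) - d.k1
noncomputable def linf : ℕ :=
  finrank F2 ↥(LinearMap.ker (d.finfM + d.fbarinfM).mulVecLin) - d.kinf

noncomputable def c0 : ℕ :=
  finrank F2 ((Fin d.a1 ⊕ Fin d.a0 → F2) ⧸
    (LinearMap.range d.f0M.mulVecLin ⊔ LinearMap.range d.fbar0M.mulVecLin))
noncomputable def c1 : ℕ :=
  finrank F2 ((Fin d.ainf ⊕ Fin d.a1 → F2) ⧸
    (LinearMap.range d.f1M.mulVecLin ⊔ LinearMap.range d.fbar1M.mulVecLin))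
noncomputable def cinf : ℕ :=
  finrank F2 ((Fin d.a0 ⊕ Fin d.ainf → F2) ⧸
    (LinearMap.range d.finfM.mulVecLin ⊔ LinearMap.range d.fbarinfM.mulVecLin))

noncomputable def dd0 : ℕ :=
  finrank F2 ↥(LinearMap.range d.f0M.mulVecLin ⊔ LinearMap.range d.fbar0M.mulVecLin) -
    finrank F2 ↥(LinearMap.range (d.f0M + d.fbar0M).mulVecLin)
noncomputable def dd1 : ℕ :=
  finrank F2 ↥(LinearMap.range d.f1M.mulVecLin ⊔ LinearMap.range d.fbar1M.mulVecLin) -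
    finrank F2 ↥(LinearMap.range (d.f1M + d.fbar1M).mulVecLin)
noncomputable def ddinf : ℕ :=
  finrank F2 ↥(LinearMap.range d.finfM.mulVecLin ⊔ LinearMap.range d.fbarinfM.mulVecLin) -
    finrank F2 ↥(LinearMap.range (d.finfM + d.fbarinfM).mulVecLin)

noncomputable def delta0 : ℕ := d.a0 - d.rinf - d.l0
noncomputable def delta1 : ℕ := d.a1 - d.r0 - d.l1
noncomputable def deltainf : ℕ := d.ainf - d.r1 - d.linf

end SplicingDatum

/-!
The map `f = [[0, 0], [I, 0]]` reads off the first component of `(x, y)`, so `f` kills `(x, y)` iff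
`x = 0`. The outer factor of `fbar = S ∘ f ∘ T` is injective, so `fbar` kills `(x, y)` iff the first
component `A x + B y` of `T (x, y)` vanishes. Given `x = 0` this says `B y = 0`, whence the common
kernel is a copy of `ker B`. The three cases are the cyclic instances of this computation.
-/

section

variable {R k l p q r : Type*} [Semiring R]

theorem finrank_eq_of_sumElim_mem_iff (K : Submodule R (p ⊕ q → R)) (L : Submodule R (q → R))
    (h : ∀ x y, Sum.elim x y ∈ K ↔ x = 0 ∧ y ∈ L) : finrank R K = finrank R L := by
  let ι : (q → R) →ₗ[R] p ⊕ q → R :=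
    (LinearEquiv.sumArrowLequivProdArrow p q R R).symm.toLinearMap ∘ₗ LinearMap.inr R _ _
  have hι (y : q → R) : ι y = Sum.elim (0 : p → R) y := rfl
  have hinj : Function.Injective ι := fun _ _ h ↦ (Sum.elim_eq_iff.1 h).2
  have hK : K = L.map ι := by
    ext w
    obtain ⟨x, y, rfl⟩ : ∃ x y, w = Sum.elim x y := ⟨_, _, (Sum.elim_comp_inl_inr w).symm⟩
    simpa [hι, Sum.elim_eq_iff, eq_comm, and_comm] using h x y
  rw [hK, (Submodule.equivMapOfInjective ι hinj L).finrank_eq]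

variable (R l p q) in
/-- The block matrix `[[0, 0], [I, 0]]`, that is, the map `(x, y) ↦ (0, x)`. It is the common shape
of `f0`, `f1` and `finf`, with independent complementary blocks `l` in the target and `q` in the
source. -/
def inlToInr [DecidableEq p] : Matrix (l ⊕ p) (p ⊕ q) R :=
  fromBlocks 0 0 1 0

variable [Fintype p] [Fintype q] [DecidableEq p]

theorem inlToInr_mulVec (x : p → R) (y : q → R) :
    inlToInr R l p q *ᵥ Sum.elim x y = Sum.elim (0 : l → R) x := by
  simp [inlToInr, fromBlocks_mulVec]

theorem inlToInr_mulVec_eq_zero_iff (x : p → R) (y : q → R) :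
    inlToInr R l p q *ᵥ Sum.elim x y = 0 ↔ x = 0 := by
  rw [inlToInr_mulVec, ← Sum.elim_zero_zero, Sum.elim_eq_iff]
  exact and_iff_right rfl

theorem mul_inlToInr_mul_fromBlocks_mulVec_eq_zero_iff [Fintype l] [Fintype r]
    {S : Matrix k (l ⊕ p) R} (hS : Function.Injective S.mulVec)
    (A : Matrix p p R) (B : Matrix p q R) (C : Matrix r p R) (D : Matrix r q R)
    (x : p → R) (y : q → R) :
    (S * inlToInr R l p r * fromBlocks A B C D) *ᵥ Sum.elim x y = 0 ↔ A *ᵥ x + B *ᵥ y = 0 := by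
  rw [← mulVec_mulVec, ← mulVec_mulVec, hS.eq_iff' (mulVec_zero S), fromBlocks_mulVec,
    inlToInr_mulVec_eq_zero_iff, Sum.elim_comp_inl, Sum.elim_comp_inr]

end

section

variable {R k l p q r : Type*} [CommRing R] [IsDomain R] [Fintype q]

theorem finrank_ker_mulVecLin (B : Matrix p q R) :
    finrank R (LinearMap.ker B.mulVecLin) = Fintype.card q - B.rank := by
  have hrank : B.rank = finrank R ((q → R) ⧸ LinearMap.ker B.mulVecLin) :=
    B.mulVecLin.quotKerEquivRange.finrank_eq.symm
  have hnullity := (LinearMap.ker B.mulVecLin).finrank_quotient_add_finrank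
  rw [finrank_fintype_fun_eq_card] at hnullity
  lia

theorem stmt0_general [Fintype l] [Fintype p] [Fintype r] [DecidableEq p]
    {S : Matrix k (l ⊕ p) R} (hS : Function.Injective S.mulVec)
    (A : Matrix p p R) (B : Matrix p q R) (C : Matrix r p R) (D : Matrix r q R) :
    let f := inlToInr R l p q
    let fbar := S * inlToInr R l p r * fromBlocks A B C D
    (∀ x y, (f *ᵥ Sum.elim x y = 0 ∧ fbar *ᵥ Sum.elim x y = 0) ↔ (x = 0 ∧ B *ᵥ y = 0)) ∧
    finrank R ↥(LinearMap.ker f.mulVecLin ⊓ LinearMap.ker fbar.mulVecLin) =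
      Fintype.card q - B.rank := by
  intro f fbar
  have hker (x : p → R) (y : q → R) :
      (f *ᵥ Sum.elim x y = 0 ∧ fbar *ᵥ Sum.elim x y = 0) ↔ (x = 0 ∧ B *ᵥ y = 0) := by
    rw [inlToInr_mulVec_eq_zero_iff, mul_inlToInr_mul_fromBlocks_mulVec_eq_zero_iff hS]
    refine and_congr_right ?_
    rintro rfl
    rw [mulVec_zero, zero_add]
  refine ⟨hker, ?_⟩
  rw [← finrank_ker_mulVecLin B]
  exact finrank_eq_of_sumElim_mem_iff _ _ hker

end

/-- description of `ker f• ∩ ker fbar•` and its dimension. -/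
theorem stmt0 (d : SplicingDatum) :
    (∀ (x : Fin d.a0 → F2) (y : Fin d.ainf → F2),
      (d.f0M.mulVec (Sum.elim x y) = 0 ∧ d.fbar0M.mulVec (Sum.elim x y) = 0) ↔
        (x = 0 ∧ d.B1.mulVec y = 0)) ∧
    (∀ (x : Fin d.a1 → F2) (y : Fin d.a0 → F2),
      (d.f1M.mulVec (Sum.elim x y) = 0 ∧ d.fbar1M.mulVec (Sum.elim x y) = 0) ↔
        (x = 0 ∧ d.Binf.mulVec y = 0)) ∧
    (∀ (x : Fin d.ainf → F2) (y : Fin d.a1 → F2),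
      (d.finfM.mulVec (Sum.elim x y) = 0 ∧ d.fbarinfM.mulVec (Sum.elim x y) = 0) ↔
        (x = 0 ∧ d.B0.mulVec y = 0)) ∧
    d.k0 = d.ainf - d.r1 ∧ d.k1 = d.a0 - d.rinf ∧ d.kinf = d.a1 - d.r0 := by
  have hS0 : Function.Injective d.tauinfinv.mulVec :=
    mulVec_injective_of_isUnit (.of_mul_eq_one _ d.invinf_right)
  have hS1 : Function.Injective d.tau0inv.mulVec :=
    mulVec_injective_of_isUnit (.of_mul_eq_one _ d.inv0_right)
  have hSinf : Function.Injective d.tau1inv.mulVec :=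
    mulVec_injective_of_isUnit (.of_mul_eq_one _ d.inv1_right)
  have ⟨hker0, hdim0⟩ := stmt0_general hS0 d.A1 d.B1 d.C1 d.D1
  have ⟨hker1, hdim1⟩ := stmt0_general hS1 d.Ainf d.Binf d.Cinf d.Dinf
  have ⟨hkerinf, hdiminf⟩ := stmt0_general hSinf d.A0 d.B0 d.C0 d.D0
  rw [Fintype.card_fin] at hdim0 hdim1 hdiminf
  exact ⟨hker0, hker1, hkerinf, hdim0, hdim1, hdiminf⟩
end

section
/- Let the notation be as in the context. Then a row vector (x,y) with x in F^{a0}, y in F^{ainf} annihilates the subspace im(finf) + im(fbarinf) of F^{a0+ainf} if and only if y = 0 and x·B1 = 0; similarly for the other two pairs of maps. Consequently the codimension of im(finf) + im(fbarinf) in F^{a0+ainf} equals a0 − r1, the codimension of im(f0) + im(fbar0) in F^{a1+a0} equals a1 − rinf, and the codimension of im(f1) + im(fbar1) in F^{ainf+a1} equals ainf − r0. -/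
set_option maxHeartbeats 1600000

open Matrix Module
open scoped Kronecker

/-
The image of `f = [[0, 0], [1, 0]]` is the kernel of the projection `π` onto the first block, so the
sum of `im f` with any subspace `V` is the preimage `π⁻¹(π V)`. Since `π ∘ (T f) = B ∘ π`, where `B`
is the upper right block of `T`, a surjective `S` gives `π(im (T f S)) = im B`. Hence
`im f + im (T f S) = π⁻¹(im B)`, whose annihilator and codimension are those of `im B`.
-/

/-- The matrix `[[0, 0], [1, 0]]` of the maps `finf`, `f0` and `f1`, over any coefficients and index
types; the index types are explicit because those of the zero blocks cannot be inferred. -/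
def lowerLeftOne (R l m n : Type*) [Zero R] [One R] [DecidableEq n] : Matrix (m ⊕ n) (n ⊕ l) R :=
  fromBlocks 0 0 1 0

section Blocks

variable {R k l m n o p : Type*}

theorem range_mulVecLin_lowerLeftOne [CommSemiring R] [Fintype l] [Fintype n] [DecidableEq n] :
    LinearMap.range (lowerLeftOne R l m n).mulVecLin =
      LinearMap.ker (LinearMap.funLeft R R (Sum.inl : m → m ⊕ n)) := by
  ext w
  constructor
  · rintro ⟨u, rfl⟩
    simp [lowerLeftOne, fromBlocks_mulVec, LinearMap.funLeft, Function.comp_def, Pi.zero_def]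
  · intro hw
    have inl_eq_zero : w ∘ Sum.inl = 0 := hw
    refine ⟨Sum.elim (w ∘ Sum.inr) 0, ?_⟩
    rw [← Sum.elim_comp_inl_inr w, inl_eq_zero]
    simp [lowerLeftOne, fromBlocks_mulVec]

theorem funLeft_inl_comp_mulVecLin_mul_lowerLeftOne [CommSemiring R] [Fintype l] [Fintype n]
    [Fintype p] [DecidableEq n] (T : Matrix (m ⊕ o) (p ⊕ n) R) :
    LinearMap.funLeft R R Sum.inl ∘ₗ (T * lowerLeftOne R l p n).mulVecLin =
      T.toBlocks₁₂.mulVecLin ∘ₗ LinearMap.funLeft R R Sum.inl := by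
  have mul_eq : T * lowerLeftOne R l p n = fromBlocks T.toBlocks₁₂ 0 T.toBlocks₂₂ 0 := by
    conv_lhs => rw [← fromBlocks_toBlocks T, lowerLeftOne, fromBlocks_multiply]
    simp
  refine LinearMap.ext fun u => funext fun i => ?_
  simp [mul_eq, fromBlocks_mulVec, LinearMap.funLeft, Function.comp_def]

section CommSemiring

variable [CommSemiring R] [Fintype m] [Fintype n]

theorem dotProduct_range_mulVecLin_eq_zero_iff (B : Matrix m n R) (x : m → R) :
    (∀ v ∈ LinearMap.range B.mulVecLin, x ⬝ᵥ v = 0) ↔ x ᵥ* B = 0 := by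
  simp only [LinearMap.mem_range, forall_exists_index, forall_apply_eq_imp_iff, mulVecLin_apply,
    dotProduct_mulVec, dotProduct_eq_zero_iff]

theorem sumElim_dotProduct_comap_inl_eq_zero_iff (N : Submodule R (m → R))
    (x : m → R) (y : n → R) :
    (∀ w ∈ N.comap (LinearMap.funLeft R R (Sum.inl : m → m ⊕ n)), Sum.elim x y ⬝ᵥ w = 0) ↔
      y = 0 ∧ ∀ v ∈ N, x ⬝ᵥ v = 0 := by
  constructor
  · intro h
    have sum_eq_zero (v : m → R) (hv : v ∈ N) (u : n → R) : x ⬝ᵥ v + y ⬝ᵥ u = 0 := by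
      simpa only [sumElim_dotProduct_sumElim] using h (Sum.elim v u) hv
    exact ⟨dotProduct_eq_zero y fun u => by simpa using sum_eq_zero 0 N.zero_mem u,
      fun v hv => by simpa using sum_eq_zero v hv 0⟩
  · rintro ⟨rfl, hx⟩ w hw
    rw [← Sum.elim_comp_inl_inr w, sumElim_dotProduct_sumElim, zero_dotProduct, add_zero]
    exact hx _ hw

end CommSemiring

variable [Fintype k] [Fintype l] [Fintype m] [Fintype n] [DecidableEq n]

theorem range_lowerLeftOne_sup_range_mul_mul [CommRing R]
    (T : Matrix (m ⊕ n) (m ⊕ n) R) {S : Matrix (n ⊕ l) k R} (hS : Function.Surjective S.mulVec) :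
    LinearMap.range (lowerLeftOne R l m n).mulVecLin ⊔
        LinearMap.range (T * lowerLeftOne R l m n * S).mulVecLin =
      (LinearMap.range T.toBlocks₁₂.mulVecLin).comap (LinearMap.funLeft R R Sum.inl) := by
  have range_proj_comp : LinearMap.range (LinearMap.funLeft R R Sum.inl ∘ₗ S.mulVecLin) = ⊤ :=
    LinearMap.range_eq_top.2
      ((LinearMap.funLeft_surjective_of_injective R R _ Sum.inl_injective).comp hS)
  have map_range : (LinearMap.range (T * lowerLeftOne R l m n * S).mulVecLin).map
      (LinearMap.funLeft R R Sum.inl) = LinearMap.range T.toBlocks₁₂.mulVecLin := by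
    rw [← LinearMap.range_comp, mulVecLin_mul, ← LinearMap.comp_assoc,
      funLeft_inl_comp_mulVecLin_mul_lowerLeftOne, LinearMap.comp_assoc,
      LinearMap.range_comp_of_range_eq_top _ range_proj_comp]
  rw [range_mulVecLin_lowerLeftOne, ← map_range, Submodule.comap_map_eq, sup_comm]

end Blocks

theorem finrank_quotient_comap_of_surjective {R V W : Type*} [Ring R] [AddCommGroup V] [Module R V]
    [AddCommGroup W] [Module R W] {f : V →ₗ[R] W} (hf : Function.Surjective f)
    (N : Submodule R W) : finrank R (V ⧸ N.comap f) = finrank R (W ⧸ N) := by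
  have hker : LinearMap.ker (N.mkQ ∘ₗ f) = N.comap f := by
    rw [LinearMap.ker_comp, Submodule.ker_mkQ]
  rw [← hker]
  exact (LinearMap.quotKerEquivOfSurjective (N.mkQ ∘ₗ f)
    ((Submodule.mkQ_surjective N).comp hf)).finrank_eq

theorem finrank_quotient_range_mulVecLin {K m n : Type*} [Field K] [Fintype m] [Fintype n]
    (B : Matrix m n K) :
    finrank K ((m → K) ⧸ LinearMap.range B.mulVecLin) = Fintype.card m - B.rank := by
  rw [Submodule.finrank_quotient, finrank_fintype_fun_eq_card, Matrix.rank]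

theorem stmt1_general {K k l m n : Type*} [Field K] [Fintype k] [Fintype l] [Fintype m] [Fintype n]
    [DecidableEq l] [DecidableEq n] (T : Matrix (m ⊕ n) (m ⊕ n) K) {S : Matrix (n ⊕ l) k K}
    {S' : Matrix k (n ⊕ l) K} (hS : S * S' = 1) :
    let W := LinearMap.range (lowerLeftOne K l m n).mulVecLin ⊔
      LinearMap.range (T * lowerLeftOne K l m n * S).mulVecLin
    (∀ (x : m → K) (y : n → K),
      (∀ w ∈ W, Sum.elim x y ⬝ᵥ w = 0) ↔ y = 0 ∧ x ᵥ* T.toBlocks₁₂ = 0) ∧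
    finrank K ((m ⊕ n → K) ⧸ W) = Fintype.card m - T.toBlocks₁₂.rank := by
  intro W
  have hW : W = (LinearMap.range T.toBlocks₁₂.mulVecLin).comap (LinearMap.funLeft K K Sum.inl) :=
    range_lowerLeftOne_sup_range_mul_mul T
      (mulVec_surjective_iff_exists_right_inverse.2 ⟨S', hS⟩)
  rw [hW]
  refine ⟨fun x y => ?_, ?_⟩
  · rw [sumElim_dotProduct_comap_inl_eq_zero_iff, dotProduct_range_mulVecLin_eq_zero_iff]
  · rw [finrank_quotient_comap_of_surjective
        (LinearMap.funLeft_surjective_of_injective K K _ Sum.inl_injective),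
      finrank_quotient_range_mulVecLin]

/-- description of the annihilator of `im f• + im fbar•` and the codimensions. -/
theorem stmt1 (d : SplicingDatum) :
    (∀ (x : Fin d.a0 → F2) (y : Fin d.ainf → F2),
      (∀ w ∈ LinearMap.range d.finfM.mulVecLin ⊔ LinearMap.range d.fbarinfM.mulVecLin,
          Sum.elim x y ⬝ᵥ w = 0) ↔ (y = 0 ∧ Matrix.vecMul x d.B1 = 0)) ∧
    (∀ (x : Fin d.a1 → F2) (y : Fin d.a0 → F2),
      (∀ w ∈ LinearMap.range d.f0M.mulVecLin ⊔ LinearMap.range d.fbar0M.mulVecLin,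
          Sum.elim x y ⬝ᵥ w = 0) ↔ (y = 0 ∧ Matrix.vecMul x d.Binf = 0)) ∧
    (∀ (x : Fin d.ainf → F2) (y : Fin d.a1 → F2),
      (∀ w ∈ LinearMap.range d.f1M.mulVecLin ⊔ LinearMap.range d.fbar1M.mulVecLin,
          Sum.elim x y ⬝ᵥ w = 0) ↔ (y = 0 ∧ Matrix.vecMul x d.B0 = 0)) ∧
    d.cinf = d.a0 - d.r1 ∧ d.c0 = d.a1 - d.rinf ∧ d.c1 = d.ainf - d.r0 := by
  obtain ⟨ann_inf, codim_inf⟩ := stmt1_general d.tau1inv d.inv0_left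
  obtain ⟨ann_0, codim_0⟩ := stmt1_general d.tauinfinv d.inv1_left
  obtain ⟨ann_1, codim_1⟩ := stmt1_general d.tau0inv d.invinf_left
  rw [Fintype.card_fin] at codim_inf codim_0 codim_1
  exact ⟨ann_inf, ann_0, ann_1, codim_inf, codim_0, codim_1⟩
end

section
/- Let the notation be as in the context. Then, as subspaces of F^{a0+ainf}, one has the equality ker(f0) ∩ ker(fbar0) = im(finf) ∩ im(fbarinf), and this subspace has dimension ainf − r1. -/
set_option maxHeartbeats 1600000

open Matrix Module
open scoped Kronecker

/-!
The matrices `finf` and `f0` form an exact pair: `im finf` and `ker f0` both consist of the vectors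
whose first block vanishes. Conjugation by the `tau`s preserves exactness, so also
`im fbarinf = ker fbar0`; this is the space of `v` such that the first block of `tau1 v` vanishes.
If `v = (0, y)`, the first block of `tau1 v` is `B1 y`, so the intersection is a copy of `ker B1`,
and rank-nullity gives its dimension.
-/

section BlockShift

variable {R l m n k : Type*} [CommRing R] [Fintype m] [Fintype n] [DecidableEq m]

/-- The block matrix `[[0, 0], [1, 0]]`, acting as `(x, y) ↦ (0, x)`: the common shape of the maps
`finf`, `f0` and `f1` of a splicing datum. -/
def blockShift (R l m n : Type*) [Zero R] [One R] [DecidableEq m] : Matrix (l ⊕ m) (m ⊕ n) R :=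
  fromBlocks 0 0 1 0

theorem blockShift_mulVec (v : m ⊕ n → R) :
    blockShift R l m n *ᵥ v = Sum.elim (0 : l → R) (v ∘ Sum.inl) := by
  simp only [blockShift, fromBlocks_mulVec, zero_mulVec, one_mulVec, add_zero]

theorem blockShift_mulVec_eq_zero_iff {v : m ⊕ n → R} :
    blockShift R l m n *ᵥ v = 0 ↔ v ∘ Sum.inl = 0 := by
  rw [blockShift_mulVec, ← Sum.elim_zero_zero, Sum.elim_eq_iff, eq_self, true_and]

theorem exists_blockShift_mulVec_eq_iff {v : l ⊕ m → R} :
    (∃ w, blockShift R l m n *ᵥ w = v) ↔ v ∘ Sum.inl = 0 := by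
  constructor
  · rintro ⟨w, rfl⟩
    rw [blockShift_mulVec, Sum.elim_comp_inl]
  · intro hv
    refine ⟨Sum.elim (v ∘ Sum.inr) 0, ?_⟩
    rw [blockShift_mulVec, Sum.elim_comp_inl, ← hv, Sum.elim_comp_inl_inr]

theorem exact_blockShift [Fintype k] [DecidableEq n] :
    Function.Exact (blockShift R m n k).mulVecLin (blockShift R l m n).mulVecLin := fun _ ↦
  blockShift_mulVec_eq_zero_iff.trans exists_blockShift_mulVec_eq_iff.symm

end BlockShift

section Conjugation

variable {R p q r : Type*} [CommRing R] [Fintype p] [Fintype q] [DecidableEq q]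

theorem ker_mulVecLin_GL_mul (S : GL q R) (N : Matrix q p R) :
    LinearMap.ker (S.val * N).mulVecLin = LinearMap.ker N.mulVecLin := by
  rw [mulVecLin_mul, LinearMap.ker_comp_of_ker_eq_bot]
  exact LinearMap.ker_eq_bot.2 (mulVec_injective_of_isUnit S.isUnit)

theorem exact_mulVecLin_conj [Fintype r] [DecidableEq p] [DecidableEq r]
    (P : GL p R) (Q : GL q R) (S : GL r R) {M : Matrix q p R} {N : Matrix r q R}
    (h : Function.Exact M.mulVecLin N.mulVecLin) :
    Function.Exact (Q⁻¹.val * M * P.val).mulVecLin (S⁻¹.val * N * Q.val).mulVecLin := by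
  refine Function.Exact.of_ladder_linearEquiv_of_exact (H := h)
    (e₁ := P⁻¹.val.toLinearEquiv' P⁻¹.invertible)
    (e₂ := Q⁻¹.val.toLinearEquiv' Q⁻¹.invertible)
    (e₃ := S⁻¹.val.toLinearEquiv' S⁻¹.invertible) ?_ ?_
  all_goals simp only [toLinearEquiv'_apply, toLin'_apply', ← mulVecLin_mul, Matrix.mul_assoc,
    Units.mul_inv, Matrix.mul_one]

end Conjugation

section KerInfKer

variable {R k l m n : Type*} [CommRing R] [Fintype n]

theorem mulVec_sumElim_zero_comp_inl [Fintype m] (M : Matrix (k ⊕ l) (m ⊕ n) R) (y : n → R) :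
    (M *ᵥ Sum.elim 0 y) ∘ Sum.inl = M.toBlocks₁₂ *ᵥ y := by
  rw [← fromBlocks_toBlocks M, fromBlocks_mulVec]
  simp only [Sum.elim_comp_inl, Sum.elim_comp_inr, mulVec_zero, zero_add, toBlocks_fromBlocks₁₂]

theorem finrank_ker_mulVecLin_s2 [IsDomain R] (M : Matrix m n R) :
    finrank R (LinearMap.ker M.mulVecLin) = Fintype.card n - M.rank := by
  have h := Submodule.finrank_quotient_add_finrank (LinearMap.ker M.mulVecLin)
  rw [M.mulVecLin.quotKerEquivRange.finrank_eq, finrank_pi] at h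
  exact Nat.eq_sub_of_add_eq' h

variable [Fintype l] [Fintype m] [DecidableEq l] [DecidableEq m] [DecidableEq n]

theorem ker_blockShift_inf_ker_conj (Q : GL (m ⊕ n) R) (S : GL (l ⊕ m) R) :
    LinearMap.ker (blockShift R l m n).mulVecLin ⊓
        LinearMap.ker (S⁻¹.val * blockShift R l m n * Q.val).mulVecLin =
      (LinearMap.ker Q.val.toBlocks₁₂.mulVecLin).map
        (fromRows 0 1 : Matrix (m ⊕ n) n R).mulVecLin := by
  ext v
  simp only [Matrix.mul_assoc, ker_mulVecLin_GL_mul, Submodule.mem_inf, Submodule.mem_map,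
    LinearMap.mem_ker, mulVecLin_apply, ← mulVec_mulVec, blockShift_mulVec_eq_zero_iff,
    fromRows_mulVec, zero_mulVec, one_mulVec]
  constructor
  · rintro ⟨hv, hQv⟩
    have hv' : Sum.elim (0 : m → R) (v ∘ Sum.inr) = v := by rw [← hv, Sum.elim_comp_inl_inr]
    exact ⟨v ∘ Sum.inr, by rw [← mulVec_sumElim_zero_comp_inl, hv', hQv], hv'⟩
  · rintro ⟨y, hy, rfl⟩
    exact ⟨Sum.elim_comp_inl _ _, by rw [mulVec_sumElim_zero_comp_inl, hy]⟩

theorem finrank_ker_blockShift_inf_ker_conj [IsDomain R] (Q : GL (m ⊕ n) R) (S : GL (l ⊕ m) R) :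
    finrank R ↥(LinearMap.ker (blockShift R l m n).mulVecLin ⊓
        LinearMap.ker (S⁻¹.val * blockShift R l m n * Q.val).mulVecLin) =
      Fintype.card n - Q.val.toBlocks₁₂.rank := by
  have inr_injective : Function.Injective (fromRows 0 1 : Matrix (m ⊕ n) n R).mulVecLin := by
    intro y z h
    simpa only [mulVecLin_apply, fromRows_mulVec, zero_mulVec, one_mulVec, Sum.elim_eq_iff,
      true_and] using h
  rw [ker_blockShift_inf_ker_conj, ← finrank_ker_mulVecLin_s2]
  exact (Submodule.equivMapOfInjective _ inr_injective _).finrank_eq.symm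

theorem stmt2_general [IsDomain R]
    (τ₀ : GL (n ⊕ l) R) (τ₁ : GL (m ⊕ n) R) (τinf : GL (l ⊕ m) R) :
    LinearMap.ker (blockShift R l m n).mulVecLin ⊓
        LinearMap.ker (τinf⁻¹.val * blockShift R l m n * τ₁.val).mulVecLin =
      LinearMap.range (blockShift R m n l).mulVecLin ⊓
        LinearMap.range (τ₁⁻¹.val * blockShift R m n l * τ₀.val).mulVecLin ∧
    finrank R ↥(LinearMap.ker (blockShift R l m n).mulVecLin ⊓
        LinearMap.ker (τinf⁻¹.val * blockShift R l m n * τ₁.val).mulVecLin) =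
      Fintype.card n - τ₁.val.toBlocks₁₂.rank := by
  have exact_f : Function.Exact (blockShift R m n l).mulVecLin (blockShift R l m n).mulVecLin :=
    exact_blockShift
  refine ⟨?_, finrank_ker_blockShift_inf_ker_conj τ₁ τinf⟩
  rw [exact_f.linearMap_ker_eq, (exact_mulVecLin_conj τ₀ τ₁ τinf exact_f).linearMap_ker_eq]

end KerInfKer

/-- `ker f0 ∩ ker fbar0 = im finf ∩ im fbarinf`, of dimension `ainf − r1`. -/
theorem stmt2 (d : SplicingDatum) :
    LinearMap.ker d.f0M.mulVecLin ⊓ LinearMap.ker d.fbar0M.mulVecLin =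
      LinearMap.range d.finfM.mulVecLin ⊓ LinearMap.range d.fbarinfM.mulVecLin ∧
    finrank F2 ↥(LinearMap.ker d.f0M.mulVecLin ⊓ LinearMap.ker d.fbar0M.mulVecLin) =
      d.ainf - d.r1 := by
  have h := stmt2_general ⟨d.tau0, d.tau0inv, d.inv0_left, d.inv0_right⟩
    ⟨d.tau1, d.tau1inv, d.inv1_left, d.inv1_right⟩
    ⟨d.tauinf, d.tauinfinv, d.invinf_left, d.invinf_right⟩
  rwa [Fintype.card_fin] at h
end

section
/- Let the notation be as in the context. Then (as integers) l0 − d0 = r1 − rinf, l1 − d1 = rinf − r0, and linf − dinf = r0 − r1. Moreover max{r1 − rinf, 0} ≤ l0 ≤ a0 − rinf, max{rinf − r0, 0} ≤ l1 ≤ a1 − r0, and max{r0 − r1, 0} ≤ linf ≤ ainf − r1 (equivalently, the quantities delta0, delta1, deltainf satisfy 0 ≤ delta0 ≤ a0 − max{r1, rinf}, 0 ≤ delta1 ≤ a1 − max{rinf, r0}, 0 ≤ deltainf ≤ ainf − max{r0, r1}, and delta0 = a0 − r1 − d0, delta1 = a1 − rinf − d1, deltainf = ainf − r0 − dinf). 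-/
set_option maxHeartbeats 1600000

open Matrix Module
open scoped Kronecker

/-!
Write `f = ι ρ` with `ι` the inclusion and `ρ` the projection of the common summand of dimension
`a`, so that `fbar = (σ ι) (ρ τ)`. Stacking the two factorizations gives `f + fbar = J P` with
`J = [ι, σ ι] = [0 B₁; 1 D₁]` and `P = [ρ; ρ τ] = [1 0; A B]`, where `[B₁; D₁]` are the last
columns of `σ` and `[A B]` the first rows of `τ`. Since `ι` and `σ ι` are injective and `ρ` and
`ρ τ` are surjective, `ker f ∩ ker fbar = ker P` and `im f + im fbar = im J`, whence
`l = rank P - rank (J P)` and `d = rank J - rank (J P)`. Now `rank P = a + rank B` and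
`rank J = a + rank B₁` give `l - d = rank B - rank B₁`, and the Sylvester rank inequality
`rank J + rank P ≤ rank (J P) + 2 a` is the upper bound `l ≤ a - rank B₁`.
-/

section BlockMaps

variable {R l m m₁ m₂ n n₁ n₂ : Type*} [CommSemiring R] [Fintype n]

theorem rank_mul_eq_right_of_mulVec_injective [Fintype m] {A : Matrix l m R}
    (hA : Function.Injective A.mulVec) (B : Matrix m n R) : (A * B).rank = B.rank := by
  rw [Matrix.rank, mulVecLin_mul, LinearMap.range_comp]
  exact (Submodule.equivMapOfInjective A.mulVecLin hA _).finrank_eq.symm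

theorem ker_mulVecLin_fromRows (P₁ : Matrix m₁ n R) (P₂ : Matrix m₂ n R) :
    LinearMap.ker (fromRows P₁ P₂).mulVecLin =
      LinearMap.ker P₁.mulVecLin ⊓ LinearMap.ker P₂.mulVecLin := by
  ext v
  simp [fromRows_mulVec, funext_iff]

theorem range_mulVecLin_fromCols [Fintype n₁] [Fintype n₂]
    (J₁ : Matrix m n₁ R) (J₂ : Matrix m n₂ R) :
    LinearMap.range (fromCols J₁ J₂).mulVecLin =
      LinearMap.range J₁.mulVecLin ⊔ LinearMap.range J₂.mulVecLin := by
  simp_rw [range_mulVecLin, ← Submodule.span_union]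
  congr 1
  ext v
  simp [funext_iff]

theorem mulVec_fromRows_one_injective [DecidableEq n] (C : Matrix m n R) :
    Function.Injective (fromRows (1 : Matrix n n R) C).mulVec := fun v w h ↦ by
  simpa [fromRows_mulVec] using congrArg (· ∘ Sum.inl) h

theorem mulVec_fromRows_zero_one_injective [DecidableEq n] :
    Function.Injective (fromRows (0 : Matrix m n R) (1 : Matrix n n R)).mulVec := fun v w h ↦ by
  simpa [fromRows_mulVec] using congrArg (· ∘ Sum.inr) h

end BlockMaps

section Rank

variable {K l m n n₁ n₂ : Type*} [Field K] [Fintype n]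

theorem rank_add_rank_le_rank_mul_add_card [Fintype m] (A : Matrix l m K) (B : Matrix m n K) :
    A.rank + B.rank ≤ (A * B).rank + Fintype.card m := by
  have rank_nullity : A.rank + finrank K (LinearMap.ker A.mulVecLin) = Fintype.card m :=
    A.mulVecLin.finrank_range_add_finrank_ker.trans (finrank_fintype_fun_eq_card K)
  let restricted := A.mulVecLin.domRestrict (LinearMap.range B.mulVecLin)
  have rank_nullity_restricted :
      (A * B).rank + finrank K (LinearMap.ker restricted) = B.rank := by
    have h := restricted.finrank_range_add_finrank_ker
    rwa [LinearMap.range_domRestrict, ← LinearMap.range_comp, ← mulVecLin_mul] at h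
  have nullity_le :
      finrank K (LinearMap.ker restricted) ≤ finrank K (LinearMap.ker A.mulVecLin) := by
    rw [LinearMap.ker_domRestrict, ← Submodule.finrank_map_subtype_eq]
    exact Submodule.finrank_mono (Submodule.map_comap_le _ _)
  lia

theorem rank_fromCols_of_disjoint [Finite m] [Fintype n₁] [Fintype n₂]
    {J₁ : Matrix m n₁ K} {J₂ : Matrix m n₂ K}
    (h : Disjoint (LinearMap.range J₁.mulVecLin) (LinearMap.range J₂.mulVecLin)) :
    (fromCols J₁ J₂).rank = J₁.rank + J₂.rank := by
  rw [Matrix.rank, range_mulVecLin_fromCols, ← add_zero (finrank K _), ← finrank_bot K (m → K),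
    ← h.eq_bot, Submodule.finrank_sup_add_finrank_inf_eq]
  rfl

theorem rank_fromBlocks_one_zero [Fintype m] [DecidableEq m] [Finite l]
    (C : Matrix l m K) (D : Matrix l n K) :
    (fromBlocks (1 : Matrix m m K) 0 C D).rank = Fintype.card m + D.rank := by
  classical
  have := Fintype.ofFinite l
  have rank_left_cols : (fromRows (1 : Matrix m m K) C).rank = Fintype.card m := by
    rw [← Matrix.mul_one (fromRows 1 C),
      rank_mul_eq_right_of_mulVec_injective (mulVec_fromRows_one_injective C), rank_one]
  have rank_right_cols : (fromRows (0 : Matrix m n K) D).rank = D.rank := by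
    rw [← rank_mul_eq_right_of_mulVec_injective (mulVec_fromRows_zero_one_injective (m := m)) D,
      fromRows_mul, Matrix.zero_mul, Matrix.one_mul]
  rw [← fromCols_fromRows_eq_fromBlocks, rank_fromCols_of_disjoint, rank_left_cols,
    rank_right_cols]
  rw [Submodule.disjoint_def]
  rintro _ ⟨v, rfl⟩ ⟨w, hvw⟩
  have v_eq_zero : v = 0 := by
    simpa [fromRows_mulVec, eq_comm] using congrArg (· ∘ Sum.inl) hvw
  rw [v_eq_zero, map_zero]

theorem rank_fromBlocks_zero_one [Fintype m] [DecidableEq m] [Finite l]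
    (B : Matrix l n K) (D : Matrix m n K) :
    (fromBlocks 0 B (1 : Matrix m m K) D).rank = Fintype.card m + B.rank := by
  have := Fintype.ofFinite l
  have swap_rows : (fromBlocks 0 B (1 : Matrix m m K) D).submatrix Sum.swap id =
      fromBlocks 1 D 0 B := by
    simp
  rw [← rank_submatrix _ (Equiv.sumComm _ _) (Equiv.refl _), Equiv.sumComm_apply, Equiv.coe_refl,
    swap_rows, ← rank_transpose, fromBlocks_transpose, transpose_one, transpose_zero,
    rank_fromBlocks_one_zero, rank_transpose]

end Rank

section Pair

variable {K l m m₁ m₂ n : Type*} [Field K] [Fintype n]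

/-- The dimension of `ker (f + g) / (ker f ∩ ker g)`, written `l` in the paper. The subtraction is
not truncated because `ker f ∩ ker g ⊆ ker (f + g)`. -/
noncomputable def kernelExcess (f g : Matrix l n K) : ℕ :=
  finrank K (LinearMap.ker (f + g).mulVecLin) -
    finrank K ↥(LinearMap.ker f.mulVecLin ⊓ LinearMap.ker g.mulVecLin)

/-- The dimension of `(im f + im g) / im (f + g)`, written `d` in the paper. The subtraction is
not truncated because `im (f + g) ⊆ im f + im g`. -/
noncomputable def rangeDefect (f g : Matrix l n K) : ℕ :=
  finrank K ↥(LinearMap.range f.mulVecLin ⊔ LinearMap.range g.mulVecLin) -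
    finrank K (LinearMap.range (f + g).mulVecLin)

variable [Fintype m₁] [Fintype m₂]

theorem kernelExcess_mul_of_injective {J₁ : Matrix l m₁ K} {J₂ : Matrix l m₂ K}
    (hJ₁ : Function.Injective J₁.mulVec) (hJ₂ : Function.Injective J₂.mulVec)
    (P₁ : Matrix m₁ n K) (P₂ : Matrix m₂ n K) :
    kernelExcess (J₁ * P₁) (J₂ * P₂) =
      (fromRows P₁ P₂).rank - (fromCols J₁ J₂ * fromRows P₁ P₂).rank := by
  have common_ker : LinearMap.ker (J₁ * P₁).mulVecLin ⊓ LinearMap.ker (J₂ * P₂).mulVecLin =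
      LinearMap.ker (fromRows P₁ P₂).mulVecLin := by
    rw [ker_mulVecLin_fromRows, mulVecLin_mul, mulVecLin_mul,
      LinearMap.ker_comp_of_ker_eq_bot _ (LinearMap.ker_eq_bot.mpr hJ₁),
      LinearMap.ker_comp_of_ker_eq_bot _ (LinearMap.ker_eq_bot.mpr hJ₂)]
  have nullity_P := (fromRows P₁ P₂).mulVecLin.finrank_range_add_finrank_ker
  have nullity_JP := (fromCols J₁ J₂ * fromRows P₁ P₂).mulVecLin.finrank_range_add_finrank_ker
  rw [kernelExcess, common_ker, ← fromCols_mul_fromRows, Matrix.rank, Matrix.rank]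
  lia

theorem rangeDefect_mul_of_surjective {P₁ : Matrix m₁ n K} {P₂ : Matrix m₂ n K}
    (J₁ : Matrix l m₁ K) (J₂ : Matrix l m₂ K)
    (hP₁ : Function.Surjective P₁.mulVec) (hP₂ : Function.Surjective P₂.mulVec) :
    rangeDefect (J₁ * P₁) (J₂ * P₂) =
      (fromCols J₁ J₂).rank - (fromCols J₁ J₂ * fromRows P₁ P₂).rank := by
  rw [rangeDefect, ← fromCols_mul_fromRows, Matrix.rank, Matrix.rank, range_mulVecLin_fromCols,
    mulVecLin_mul, mulVecLin_mul,
    LinearMap.range_comp_of_range_eq_top _ (LinearMap.range_eq_top.mpr hP₁),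
    LinearMap.range_comp_of_range_eq_top _ (LinearMap.range_eq_top.mpr hP₂)]

end Pair

section Shift

variable {K l m n : Type*} [Field K] [Fintype m] [Fintype n] [DecidableEq m]

theorem mul_fromBlocks_zero_one_mul [Fintype l] (σ : Matrix (l ⊕ m) (l ⊕ m) K)
    (τ : Matrix (m ⊕ n) (m ⊕ n) K) :
    σ * fromBlocks 0 (0 : Matrix l n K) (1 : Matrix m m K) 0 * τ = σ.toCols₂ * τ.toRows₁ := by
  have shift_eq : fromBlocks 0 (0 : Matrix l n K) (1 : Matrix m m K) 0 =
      fromRows 0 (1 : Matrix m m K) * fromCols (1 : Matrix m m K) 0 := by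
    simp only [fromRows_mul_fromCols, Matrix.zero_mul, Matrix.mul_zero, Matrix.one_mul]
  have mul_inclusion : σ * fromRows (0 : Matrix l m K) (1 : Matrix m m K) = σ.toCols₂ := by
    conv_lhs => rw [← fromCols_toCols σ, fromCols_mul_fromRows, Matrix.mul_zero, Matrix.mul_one,
      zero_add]
  have projection_mul : fromCols (1 : Matrix m m K) (0 : Matrix m n K) * τ = τ.toRows₁ := by
    conv_lhs => rw [← fromRows_toRows τ, fromCols_mul_fromRows, Matrix.one_mul, Matrix.zero_mul,
      add_zero]
  rw [shift_eq, ← Matrix.mul_assoc, mul_inclusion, Matrix.mul_assoc, projection_mul]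

theorem mulVec_toCols₂_injective [Fintype l] [DecidableEq l]
    {σ : Matrix (l ⊕ m) (l ⊕ m) K} (hσ : IsUnit σ) :
    Function.Injective σ.toCols₂.mulVec := fun v w h ↦ by
  have mulVec_extend (u : m → K) : σ *ᵥ Sum.elim 0 u = σ.toCols₂ *ᵥ u := by
    conv_lhs => rw [← fromCols_toCols σ, fromCols_mulVec, Sum.elim_comp_inl, Sum.elim_comp_inr,
      mulVec_zero, zero_add]
  have extensions_eq := mulVec_injective_of_isUnit hσ
    ((mulVec_extend v).trans (h.trans (mulVec_extend w).symm))
  simpa using congrArg (· ∘ Sum.inr) extensions_eq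

theorem mulVec_toRows₁_surjective [DecidableEq n] {τ : Matrix (m ⊕ n) (m ⊕ n) K} (hτ : IsUnit τ) :
    Function.Surjective τ.toRows₁.mulVec := fun v ↦
  let ⟨u, hu⟩ := mulVec_surjective_iff_isUnit.mpr hτ (Sum.elim v 0)
  ⟨u, congrArg (· ∘ Sum.inl) hu⟩

theorem rank_fromRows_toRows₁_one [DecidableEq n] (τ : Matrix (m ⊕ n) (m ⊕ n) K) :
    (fromRows (1 : Matrix (m ⊕ n) (m ⊕ n) K).toRows₁ τ.toRows₁).rank =
      Fintype.card m + τ.toBlocks₁₂.rank := by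
  rw [← rank_fromBlocks_one_zero τ.toBlocks₁₁]
  congr 1
  ext (i | i) (j | j) <;> simp [one_apply, toBlocks₁₁, toBlocks₁₂]

theorem rank_fromCols_toCols₂_one [Finite l] [DecidableEq l] (σ : Matrix (l ⊕ m) (l ⊕ m) K) :
    (fromCols (1 : Matrix (l ⊕ m) (l ⊕ m) K).toCols₂ σ.toCols₂).rank =
      Fintype.card m + σ.toBlocks₁₂.rank := by
  rw [← rank_fromBlocks_zero_one σ.toBlocks₁₂ σ.toBlocks₂₂]
  congr 1
  ext (i | i) (j | j) <;> simp [one_apply, toBlocks₁₂, toBlocks₂₂]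

theorem stmt3_general [Fintype l] [DecidableEq l] [DecidableEq n]
    {τ : Matrix (m ⊕ n) (m ⊕ n) K} {σ : Matrix (l ⊕ m) (l ⊕ m) K} (hτ : IsUnit τ) (hσ : IsUnit σ)
    {f fbar : Matrix (l ⊕ m) (m ⊕ n) K} (hf : f = fromBlocks 0 0 1 0) (hfbar : fbar = σ * f * τ) :
    ((kernelExcess f fbar : ℤ) - rangeDefect f fbar = τ.toBlocks₁₂.rank - σ.toBlocks₁₂.rank) ∧
    (max ((τ.toBlocks₁₂.rank : ℤ) - σ.toBlocks₁₂.rank) 0 ≤ kernelExcess f fbar ∧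
      (kernelExcess f fbar : ℤ) ≤ Fintype.card m - σ.toBlocks₁₂.rank) ∧
    (0 ≤ ((Fintype.card m - σ.toBlocks₁₂.rank - kernelExcess f fbar : ℕ) : ℤ) ∧
      ((Fintype.card m - σ.toBlocks₁₂.rank - kernelExcess f fbar : ℕ) : ℤ) ≤
        Fintype.card m - ((max τ.toBlocks₁₂.rank σ.toBlocks₁₂.rank : ℕ) : ℤ) ∧
      ((Fintype.card m - σ.toBlocks₁₂.rank - kernelExcess f fbar : ℕ) : ℤ) =
        Fintype.card m - τ.toBlocks₁₂.rank - rangeDefect f fbar) := by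
  have f_eq : f = (1 : Matrix (l ⊕ m) (l ⊕ m) K).toCols₂ *
      (1 : Matrix (m ⊕ n) (m ⊕ n) K).toRows₁ := by
    rw [hf, ← mul_fromBlocks_zero_one_mul, Matrix.one_mul, Matrix.mul_one]
  have fbar_eq : fbar = σ.toCols₂ * τ.toRows₁ := by
    rw [hfbar, hf, mul_fromBlocks_zero_one_mul]
  have excess_eq := kernelExcess_mul_of_injective (mulVec_toCols₂_injective isUnit_one)
    (mulVec_toCols₂_injective hσ) (1 : Matrix (m ⊕ n) (m ⊕ n) K).toRows₁ τ.toRows₁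
  have defect_eq := rangeDefect_mul_of_surjective (1 : Matrix (l ⊕ m) (l ⊕ m) K).toCols₂
    σ.toCols₂ (mulVec_toRows₁_surjective isUnit_one) (mulVec_toRows₁_surjective hτ)
  rw [← f_eq, ← fbar_eq] at excess_eq defect_eq
  set J := fromCols (1 : Matrix (l ⊕ m) (l ⊕ m) K).toCols₂ σ.toCols₂
  set P := fromRows (1 : Matrix (m ⊕ n) (m ⊕ n) K).toRows₁ τ.toRows₁
  have rank_J : J.rank = Fintype.card m + σ.toBlocks₁₂.rank := rank_fromCols_toCols₂_one σ
  have rank_P : P.rank = Fintype.card m + τ.toBlocks₁₂.rank := rank_fromRows_toRows₁_one τ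
  have sylvester := rank_add_rank_le_rank_mul_add_card J P
  have rank_mul_le_J := rank_mul_le_left J P
  have rank_mul_le_P := rank_mul_le_right J P
  rw [Fintype.card_sum] at sylvester
  lia

end Shift

/-- relations and bounds between `l•`, `d•`, `r•` and `delta•`. -/
theorem stmt3 (d : SplicingDatum) :
    ((d.l0 : ℤ) - (d.dd0 : ℤ) = (d.r1 : ℤ) - (d.rinf : ℤ)) ∧
    ((d.l1 : ℤ) - (d.dd1 : ℤ) = (d.rinf : ℤ) - (d.r0 : ℤ)) ∧
    ((d.linf : ℤ) - (d.ddinf : ℤ) = (d.r0 : ℤ) - (d.r1 : ℤ)) ∧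
    (max ((d.r1 : ℤ) - (d.rinf : ℤ)) 0 ≤ (d.l0 : ℤ) ∧ (d.l0 : ℤ) ≤ (d.a0 : ℤ) - (d.rinf : ℤ)) ∧
    (max ((d.rinf : ℤ) - (d.r0 : ℤ)) 0 ≤ (d.l1 : ℤ) ∧ (d.l1 : ℤ) ≤ (d.a1 : ℤ) - (d.r0 : ℤ)) ∧
    (max ((d.r0 : ℤ) - (d.r1 : ℤ)) 0 ≤ (d.linf : ℤ) ∧ (d.linf : ℤ) ≤ (d.ainf : ℤ) - (d.r1 : ℤ)) ∧
    (0 ≤ (d.delta0 : ℤ) ∧ (d.delta0 : ℤ) ≤ (d.a0 : ℤ) - ((max d.r1 d.rinf : ℕ) : ℤ) ∧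
      (d.delta0 : ℤ) = (d.a0 : ℤ) - (d.r1 : ℤ) - (d.dd0 : ℤ)) ∧
    (0 ≤ (d.delta1 : ℤ) ∧ (d.delta1 : ℤ) ≤ (d.a1 : ℤ) - ((max d.rinf d.r0 : ℕ) : ℤ) ∧
      (d.delta1 : ℤ) = (d.a1 : ℤ) - (d.rinf : ℤ) - (d.dd1 : ℤ)) ∧
    (0 ≤ (d.deltainf : ℤ) ∧ (d.deltainf : ℤ) ≤ (d.ainf : ℤ) - ((max d.r0 d.r1 : ℕ) : ℤ) ∧
      (d.deltainf : ℤ) = (d.ainf : ℤ) - (d.r0 : ℤ) - (d.ddinf : ℤ)) := by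
  obtain ⟨relation0, l0_bounds, delta0_bounds⟩ := stmt3_general (.of_mul_eq_one _ d.inv1_left)
    (.of_mul_eq_one _ d.invinf_right) (f := d.f0M) (fbar := d.fbar0M) rfl rfl
  obtain ⟨relation1, l1_bounds, delta1_bounds⟩ := stmt3_general (.of_mul_eq_one _ d.invinf_left)
    (.of_mul_eq_one _ d.inv0_right) (f := d.f1M) (fbar := d.fbar1M) rfl rfl
  obtain ⟨relationinf, linf_bounds, deltainf_bounds⟩ := stmt3_general
    (.of_mul_eq_one _ d.inv0_left) (.of_mul_eq_one _ d.inv1_right)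
    (f := d.finfM) (fbar := d.fbarinfM) rfl rfl
  simp only [Fintype.card_fin] at *
  exact ⟨relation0, relation1, relationinf, l0_bounds, l1_bounds, linf_bounds,
    delta0_bounds, delta1_bounds, deltainf_bounds⟩
end

section
/- Let the notation be as in the context, with two splicing data (superscripts 1 and 2) and the splicing map D. Suppose that for each i in {1,2} we are given vectors z0^i in F^{ainf^i}, z1^i in F^{a0^i}, zinf^i in F^{a1^i} with B1^i z0^i = 0, Binf^i z1^i = 0, B0^i zinf^i = 0, and vectors xinf^i in F^{ainf^i}, yinf^i in F^{a1^i} with B1^i xinf^i = 0 and (D1^i + A0^i) xinf^i + B0^i yinf^i = 0; vectors x1^i in F^{a1^i}, y1^i in F^{a0^i} with B0^i x1^i = 0 and (D0^i + Ainf^i) x1^i + Binf^i y1^i = 0; and vectors x0^i in F^{a0^i}, y0^i in F^{ainf^i} with Binf^i x0^i = 0 and (Dinf^i + A1^i) x0^i + B1^i y0^i = 0. Then the vector with components (y0^1 ⊗ xinf^2 + xinf^1 ⊗ y0^2 + z0^1 ⊗ z0^2, xinf^1 ⊗ x0^2, yinf^1 ⊗ x0^2 + x1^1 ⊗ y1^2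 + zinf^1 ⊗ z1^2, x0^1 ⊗ xinf^2, y1^1 ⊗ x1^2 + x0^1 ⊗ yinf^2 + z1^1 ⊗ zinf^2, x1^1 ⊗ x1^2) lies in the kernel of D. -/
set_option maxHeartbeats 1600000

open Matrix Module
open scoped Kronecker

namespace SplicingDatum

/-- Index type of the source of the splicing map `D`. -/
abbrev Src (e1 e2 : SplicingDatum) : Type :=
  (Fin e1.ainf × Fin e2.ainf) ⊕ (Fin e1.ainf × Fin e2.a0) ⊕ (Fin e1.a1 × Fin e2.a0) ⊕
    (Fin e1.a0 × Fin e2.ainf) ⊕ (Fin e1.a0 × Fin e2.a1) ⊕ (Fin e1.a1 × Fin e2.a1)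

/-- Index type of the target of the splicing map `D`. -/
abbrev Tgt (e1 e2 : SplicingDatum) : Type :=
  (Fin e1.a0 × Fin e2.a0) ⊕ (Fin e1.ainf × Fin e2.a1) ⊕ (Fin e1.ainf × Fin e2.a0) ⊕
    (Fin e1.a1 × Fin e2.ainf) ⊕ (Fin e1.a0 × Fin e2.ainf) ⊕ (Fin e1.a1 × Fin e2.a1)

def row1 (e1 e2 : SplicingDatum) : Matrix (Fin e1.a0 × Fin e2.a0) (Src e1 e2) F2 :=
  Matrix.fromCols ((e1.Dinf * e1.B1) ⊗ₖ (e2.B1 * e2.A0)) <|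
  Matrix.fromCols ((e1.B1 * e1.A0) ⊗ₖ (1 : Matrix (Fin e2.a0) (Fin e2.a0) F2)) <|
  Matrix.fromCols ((e1.B1 * e1.B0) ⊗ₖ (1 : Matrix (Fin e2.a0) (Fin e2.a0) F2)) <|
  Matrix.fromCols ((e1.Dinf * e1.A1) ⊗ₖ (e2.B1 * e2.A0)) <|
  Matrix.fromCols ((1 : Matrix (Fin e1.a0) (Fin e1.a0) F2) ⊗ₖ (e2.B1 * e2.B0)) 0

def row2 (e1 e2 : SplicingDatum) : Matrix (Fin e1.ainf × Fin e2.a1) (Src e1 e2) F2 :=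
  Matrix.fromCols ((1 : Matrix (Fin e1.ainf) (Fin e1.ainf) F2) ⊗ₖ (e2.Binf * e2.B1)) <|
  Matrix.fromCols ((e1.D1 * e1.A0) ⊗ₖ (e2.Binf * e2.A1)) <|
  Matrix.fromCols ((e1.D1 * e1.B0) ⊗ₖ (e2.Binf * e2.A1)) <|
  Matrix.fromCols 0 <|
  Matrix.fromCols ((e1.B0 * e1.Binf) ⊗ₖ (1 : Matrix (Fin e2.a1) (Fin e2.a1) F2))
    ((e1.B0 * e1.Ainf) ⊗ₖ (1 : Matrix (Fin e2.a1) (Fin e2.a1) F2))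

def row3 (e1 e2 : SplicingDatum) : Matrix (Fin e1.ainf × Fin e2.a0) (Src e1 e2) F2 :=
  Matrix.fromCols ((1 : Matrix (Fin e1.ainf) (Fin e1.ainf) F2) ⊗ₖ (e2.Dinf * e2.B1)) <|
  Matrix.fromCols
    ((1 : Matrix (Fin e1.ainf) (Fin e1.ainf) F2) ⊗ₖ (1 : Matrix (Fin e2.a0) (Fin e2.a0) F2) +
      (e1.D1 * e1.A0) ⊗ₖ (e2.Dinf * e2.A1)) <|
  Matrix.fromCols ((e1.D1 * e1.B0) ⊗ₖ (e2.Dinf * e2.A1)) <|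
  Matrix.fromCols 0 <|
  Matrix.fromCols 0 0

def row4 (e1 e2 : SplicingDatum) : Matrix (Fin e1.a1 × Fin e2.ainf) (Src e1 e2) F2 :=
  Matrix.fromCols ((e1.Binf * e1.B1) ⊗ₖ (1 : Matrix (Fin e2.ainf) (Fin e2.ainf) F2)) <|
  Matrix.fromCols 0 <|
  Matrix.fromCols ((1 : Matrix (Fin e1.a1) (Fin e1.a1) F2) ⊗ₖ (e2.B0 * e2.Binf)) <|
  Matrix.fromCols ((e1.Binf * e1.A1) ⊗ₖ (1 : Matrix (Fin e2.ainf) (Fin e2.ainf) F2)) <|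
  Matrix.fromCols
    ((e1.D0 * e1.Binf) ⊗ₖ (e2.B0 * e2.Ainf) + (e1.X1M * e1.Binf) ⊗ₖ (e2.B0 * e2.X1M))
    ((e1.D0 * e1.Ainf) ⊗ₖ (e2.B0 * e2.Ainf) + (e1.X1M * e1.Ainf) ⊗ₖ (e2.B0 * e2.X1M))

def row5 (e1 e2 : SplicingDatum) : Matrix (Fin e1.a0 × Fin e2.ainf) (Src e1 e2) F2 :=
  Matrix.fromCols ((e1.Dinf * e1.B1) ⊗ₖ (e2.D1 * e2.A0)) <|
  Matrix.fromCols 0 <|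
  Matrix.fromCols 0 <|
  Matrix.fromCols
    ((1 : Matrix (Fin e1.a0) (Fin e1.a0) F2) ⊗ₖ (1 : Matrix (Fin e2.ainf) (Fin e2.ainf) F2) +
      (e1.Dinf * e1.A1) ⊗ₖ (e2.D1 * e2.A0)) <|
  Matrix.fromCols ((1 : Matrix (Fin e1.a0) (Fin e1.a0) F2) ⊗ₖ (e2.D1 * e2.B0)) 0

def row6 (e1 e2 : SplicingDatum) : Matrix (Fin e1.a1 × Fin e2.a1) (Src e1 e2) F2 :=
  Matrix.fromCols 0 <|
  Matrix.fromCols 0 <|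
  Matrix.fromCols ((1 : Matrix (Fin e1.a1) (Fin e1.a1) F2) ⊗ₖ (e2.D0 * e2.Binf)) <|
  Matrix.fromCols 0 <|
  Matrix.fromCols
    ((e1.D0 * e1.Binf) ⊗ₖ (e2.D0 * e2.Ainf) + (e1.X1M * e1.Binf) ⊗ₖ (e2.D0 * e2.X1M))
    ((1 : Matrix (Fin e1.a1) (Fin e1.a1) F2) ⊗ₖ (1 : Matrix (Fin e2.a1) (Fin e2.a1) F2) +
      (e1.D0 * e1.Ainf) ⊗ₖ (e2.D0 * e2.Ainf) + (e1.X1M * e1.Ainf) ⊗ₖ (e2.D0 * e2.X1M))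

/-- The splicing map `D = D(K1, K2)` as a `6 × 6` block matrix. -/
def spliceD (e1 e2 : SplicingDatum) : Matrix (Tgt e1 e2) (Src e1 e2) F2 :=
  Matrix.fromRows (row1 e1 e2) <| Matrix.fromRows (row2 e1 e2) <|
  Matrix.fromRows (row3 e1 e2) <| Matrix.fromRows (row4 e1 e2) <|
  Matrix.fromRows (row5 e1 e2) (row6 e1 e2)

end SplicingDatum

/-!
The vector is a sum of four pieces, each killed by `D`. On a tensor built from the `zᵢ`, every block
applies to one of the two factors the matrix that annihilates it. For the other pieces, put
`w = A₀ x∞ + B₀ y∞`. In characteristic 2 the hypotheses on `(x∞, y∞)` say `B₁ x∞ = 0` and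
`w = D₁ x∞`, so that `τ₁⁻¹ (0, x∞) = (0, w)`; applying `τ₁` gives `B₁ w = 0` and `D₁ w = x∞`, and
cyclically for `(x₀, y₀)` and `(x₁, y₁)`. On a piece made of two such pairs, with combinations `w`
and `w'`, the terms of a row that do not vanish outright collect `w` in the left factor and then,
once `D w = x` is used, `w'` in the right one, so that the row is `0` or `x ⊗ x' + x ⊗ x'`.
-/

section BalancedPair

variable {R m n p : Type*} [Fintype n]

theorem mulVec_mulVec_of_fromBlocks_mul_fromBlocks_eq_one [Semiring R] [Fintype m]
    [Fintype p] {l : Type*} [DecidableEq l] [DecidableEq p] {A : Matrix l m R} {B : Matrix l n R}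
    {C : Matrix p m R} {D : Matrix p n R} {A' : Matrix m l R} {B' : Matrix m p R}
    {C' : Matrix n l R} {D' : Matrix n p R}
    (h : fromBlocks A B C D * fromBlocks A' B' C' D' = 1) {x : p → R}
    (hx : B' *ᵥ x = 0) : B *ᵥ D' *ᵥ x = 0 ∧ D *ᵥ D' *ᵥ x = x := by
  rw [fromBlocks_multiply, ← fromBlocks_one, fromBlocks_inj] at h
  obtain ⟨-, hB, -, hD⟩ := h
  constructor
  · simpa [add_mulVec, ← mulVec_mulVec, hx] using congrArg (· *ᵥ x) hB
  · simpa [add_mulVec, ← mulVec_mulVec, hx] using congrArg (· *ᵥ x) hD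

/-- The relations satisfied by the pairs `(x, y)` that enter the kernel vector, with
`w = A' x + B' y`. When `B`, `D` are the right-hand blocks of `τ₁` and `A'`, `B'` the upper blocks
of `τ₀`, they say that `(x, y)` lies in the kernel of `f∞ + f̄∞`; the other two kinds of pairs are
obtained by permuting `0`, `1`, `∞` cyclically. -/
structure IsBalancedPair [NonUnitalNonAssocSemiring R] [Fintype p] (B : Matrix m n R)
    (D A' : Matrix n n R) (B' : Matrix n p R) (x : n → R) (y : p → R) : Prop where
  mulVec_fst_eq_zero : B *ᵥ x = 0
  mulVec_comb_eq_zero : B *ᵥ (A' *ᵥ x + B' *ᵥ y) = 0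
  mulVec_comb_eq_fst : D *ᵥ (A' *ᵥ x + B' *ᵥ y) = x

theorem IsBalancedPair.of_fromBlocks_mul_fromBlocks_eq_one [Ring R] [CharP R 2] [Fintype m]
    [Fintype p] [DecidableEq m] [DecidableEq n] {A : Matrix m m R} {B : Matrix m n R}
    {C C' : Matrix n m R} {D A' : Matrix n n R} {B' : Matrix n p R}
    (h : fromBlocks A B C D * fromBlocks A B C' D = 1) {x : n → R} {y : p → R}
    (hx : B *ᵥ x = 0) (hxy : (D + A') *ᵥ x + B' *ᵥ y = 0) : IsBalancedPair B D A' B' x y := by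
  have hw : A' *ᵥ x + B' *ᵥ y = D *ᵥ x := by
    rw [add_mulVec, add_assoc] at hxy
    exact funext fun i => (CharTwo.add_eq_zero.1 (congrFun hxy i)).symm
  obtain ⟨hBD, hDD⟩ := mulVec_mulVec_of_fromBlocks_mul_fromBlocks_eq_one h hx
  exact ⟨hx, hw ▸ hBD, hw ▸ hDD⟩

end BalancedPair

section TensVec

variable {m n p q : Type*}

@[simp]
theorem tensVec_zero_left (y : n → F2) : tensVec (0 : m → F2) y = 0 :=
  funext fun _ => zero_mul _

@[simp]
theorem tensVec_zero_right (x : m → F2) : tensVec x (0 : n → F2) = 0 :=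
  funext fun _ => mul_zero _

theorem tensVec_add_left (x x' : m → F2) (y : n → F2) :
    tensVec (x + x') y = tensVec x y + tensVec x' y :=
  funext fun _ => add_mul _ _ _

theorem tensVec_add_right (x : m → F2) (y y' : n → F2) :
    tensVec x (y + y') = tensVec x y + tensVec x y' :=
  funext fun _ => mul_add _ _ _

@[simp]
theorem kronecker_mulVec_tensVec [Fintype m] [Fintype n]
    (M : Matrix p m F2) (N : Matrix q n F2) (x : m → F2) (y : n → F2) :
    (M ⊗ₖ N) *ᵥ tensVec x y = tensVec (M *ᵥ x) (N *ᵥ y) := by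
  ext ⟨i, j⟩
  simp only [mulVec, dotProduct, tensVec, Fintype.sum_prod_type, kroneckerMap_apply,
    Finset.sum_mul_sum, mul_mul_mul_comm]

end TensVec

namespace IsBalancedPair

variable {m n p : Type*} [Fintype n] [Fintype p]
  {B : Matrix m n F2} {D A' : Matrix n n F2} {B' : Matrix n p F2} {x : n → F2} {y : p → F2}

theorem tensVec_add_eq_zero (h : IsBalancedPair B D A' B' x y) {q : Type*} (u : q → F2) :
    tensVec (B *ᵥ A' *ᵥ x) u + tensVec (B *ᵥ B' *ᵥ y) u = 0 := by
  rw [← tensVec_add_left, ← mulVec_add, h.mulVec_comb_eq_zero, tensVec_zero_left]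

theorem tensVec_add_add (h : IsBalancedPair B D A' B' x y) {q : Type*} (u v : q → F2) :
    tensVec (D *ᵥ A' *ᵥ x) u + tensVec (D *ᵥ B' *ᵥ y) u + tensVec x v = tensVec x (u + v) := by
  rw [← tensVec_add_left, ← mulVec_add, h.mulVec_comb_eq_fst, ← tensVec_add_right]

variable {q r s : Type*} [Fintype r] [Fintype s]
  {B₂ : Matrix q r F2} {D₂ A₂' : Matrix r r F2} {B₂' : Matrix r s F2} {x' : r → F2} {y' : s → F2}

theorem tensVec_add_add_eq_zero (h : IsBalancedPair B D A' B' x y)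
    (h' : IsBalancedPair B₂ D₂ A₂' B₂' x' y') :
    tensVec (D *ᵥ A' *ᵥ x) (B₂ *ᵥ A₂' *ᵥ x') + tensVec (D *ᵥ B' *ᵥ y) (B₂ *ᵥ A₂' *ᵥ x') +
      tensVec x (B₂ *ᵥ B₂' *ᵥ y') = 0 := by
  rw [h.tensVec_add_add, ← mulVec_add, h'.mulVec_comb_eq_zero, tensVec_zero_right]

theorem tensVec_add_add_eq_tensVec (h : IsBalancedPair B D A' B' x y)
    (h' : IsBalancedPair B₂ D₂ A₂' B₂' x' y') :
    tensVec (D *ᵥ A' *ᵥ x) (D₂ *ᵥ A₂' *ᵥ x') + tensVec (D *ᵥ B' *ᵥ y) (D₂ *ᵥ A₂' *ᵥ x') +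
      tensVec x (D₂ *ᵥ B₂' *ᵥ y') = tensVec x x' := by
  rw [h.tensVec_add_add, ← mulVec_add, h'.mulVec_comb_eq_fst]

end IsBalancedPair

namespace SplicingDatum

variable {e1 e2 : SplicingDatum}

/-- The vector of the source of the splicing map with the given six components, in the order of the
columns of `spliceD`. -/
def srcVec (v₁ : Fin e1.ainf × Fin e2.ainf → F2) (v₂ : Fin e1.ainf × Fin e2.a0 → F2)
    (v₃ : Fin e1.a1 × Fin e2.a0 → F2) (v₄ : Fin e1.a0 × Fin e2.ainf → F2)
    (v₅ : Fin e1.a0 × Fin e2.a1 → F2) (v₆ : Fin e1.a1 × Fin e2.a1 → F2) : Src e1 e2 → F2 :=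
  Sum.elim v₁ (Sum.elim v₂ (Sum.elim v₃ (Sum.elim v₄ (Sum.elim v₅ v₆))))

theorem spliceD_mulVec_eq_zero_iff {v : Src e1 e2 → F2} :
    spliceD e1 e2 *ᵥ v = 0 ↔
      row1 e1 e2 *ᵥ v = 0 ∧ row2 e1 e2 *ᵥ v = 0 ∧ row3 e1 e2 *ᵥ v = 0 ∧
        row4 e1 e2 *ᵥ v = 0 ∧ row5 e1 e2 *ᵥ v = 0 ∧ row6 e1 e2 *ᵥ v = 0 := by
  simp only [spliceD, fromRows_mulVec, ← Sum.elim_zero_zero, Sum.elim_eq_iff]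

theorem spliceD_mulVec_srcVec_of_ker
    {z0 : Fin e1.ainf → F2} {z1 : Fin e1.a0 → F2} {zinf : Fin e1.a1 → F2}
    {z0' : Fin e2.ainf → F2} {z1' : Fin e2.a0 → F2} {zinf' : Fin e2.a1 → F2}
    (h0 : e1.B1 *ᵥ z0 = 0) (h1 : e1.Binf *ᵥ z1 = 0) (hinf : e1.B0 *ᵥ zinf = 0)
    (h0' : e2.B1 *ᵥ z0' = 0) (h1' : e2.Binf *ᵥ z1' = 0) (hinf' : e2.B0 *ᵥ zinf' = 0) :
    spliceD e1 e2 *ᵥ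
      srcVec (tensVec z0 z0') 0 (tensVec zinf z1') 0 (tensVec z1 zinf') 0 = 0 := by
  rw [spliceD_mulVec_eq_zero_iff]
  simp [row1, row2, row3, row4, row5, row6, srcVec, add_mulVec, ← mulVec_mulVec,
    h0, h1, hinf, h0', h1', hinf']

theorem spliceD_mulVec_srcVec_of_inf_of_zero {x : Fin e1.ainf → F2} {y : Fin e1.a1 → F2}
    {x' : Fin e2.a0 → F2} {y' : Fin e2.ainf → F2}
    (h : IsBalancedPair e1.B1 e1.D1 e1.A0 e1.B0 x y)
    (h' : IsBalancedPair e2.Binf e2.Dinf e2.A1 e2.B1 x' y') :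
    spliceD e1 e2 *ᵥ srcVec (tensVec x y') (tensVec x x') (tensVec y x') 0 0 0 = 0 := by
  have hrow1 := h.tensVec_add_eq_zero x'
  have hrow2 : tensVec x (e2.Binf *ᵥ e2.B1 *ᵥ y') +
      (tensVec (e1.D1 *ᵥ e1.A0 *ᵥ x) (e2.Binf *ᵥ e2.A1 *ᵥ x') +
        tensVec (e1.D1 *ᵥ e1.B0 *ᵥ y) (e2.Binf *ᵥ e2.A1 *ᵥ x')) = 0 := by
    linear_combination h.tensVec_add_add_eq_zero h'
  have hrow3 : tensVec x (e2.Dinf *ᵥ e2.B1 *ᵥ y') +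
      (tensVec x x' + tensVec (e1.D1 *ᵥ e1.A0 *ᵥ x) (e2.Dinf *ᵥ e2.A1 *ᵥ x') +
        tensVec (e1.D1 *ᵥ e1.B0 *ᵥ y) (e2.Dinf *ᵥ e2.A1 *ᵥ x')) = 0 := by
    linear_combination h.tensVec_add_add_eq_tensVec h' + ZModModule.add_self (tensVec x x')
  rw [spliceD_mulVec_eq_zero_iff]
  simp [row1, row2, row3, row4, row5, row6, srcVec, add_mulVec, ← mulVec_mulVec,
    h.mulVec_fst_eq_zero, h'.mulVec_fst_eq_zero, hrow1, hrow2, hrow3]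

theorem spliceD_mulVec_srcVec_of_one_of_one {x : Fin e1.a1 → F2} {y : Fin e1.a0 → F2}
    {x' : Fin e2.a1 → F2} {y' : Fin e2.a0 → F2}
    (h : IsBalancedPair e1.B0 e1.D0 e1.Ainf e1.Binf x y)
    (h' : IsBalancedPair e2.B0 e2.D0 e2.Ainf e2.Binf x' y') :
    spliceD e1 e2 *ᵥ srcVec 0 0 (tensVec x y') 0 (tensVec y x') (tensVec x x') = 0 := by
  have hrow2 : tensVec (e1.B0 *ᵥ e1.Binf *ᵥ y) x' + tensVec (e1.B0 *ᵥ e1.Ainf *ᵥ x) x' = 0 := by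
    linear_combination h.tensVec_add_eq_zero x'
  have hrow4 : tensVec x (e2.B0 *ᵥ e2.Binf *ᵥ y') +
      (tensVec (e1.D0 *ᵥ e1.Binf *ᵥ y) (e2.B0 *ᵥ e2.Ainf *ᵥ x') +
        tensVec (e1.D0 *ᵥ e1.Ainf *ᵥ x) (e2.B0 *ᵥ e2.Ainf *ᵥ x')) = 0 := by
    linear_combination h.tensVec_add_add_eq_zero h'
  have hrow6 : tensVec x (e2.D0 *ᵥ e2.Binf *ᵥ y') +
      (tensVec (e1.D0 *ᵥ e1.Binf *ᵥ y) (e2.D0 *ᵥ e2.Ainf *ᵥ x') +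
        (tensVec x x' + tensVec (e1.D0 *ᵥ e1.Ainf *ᵥ x) (e2.D0 *ᵥ e2.Ainf *ᵥ x'))) = 0 := by
    linear_combination h.tensVec_add_add_eq_tensVec h' + ZModModule.add_self (tensVec x x')
  rw [spliceD_mulVec_eq_zero_iff]
  simp [row1, row2, row3, row4, row5, row6, X1M, srcVec, add_mulVec, ← mulVec_mulVec,
    h.mulVec_fst_eq_zero, h'.mulVec_fst_eq_zero, hrow2, hrow4, hrow6]

theorem spliceD_mulVec_srcVec_of_zero_of_inf {x : Fin e1.a0 → F2} {y : Fin e1.ainf → F2}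
    {x' : Fin e2.ainf → F2} {y' : Fin e2.a1 → F2}
    (h : IsBalancedPair e1.Binf e1.Dinf e1.A1 e1.B1 x y)
    (h' : IsBalancedPair e2.B1 e2.D1 e2.A0 e2.B0 x' y') :
    spliceD e1 e2 *ᵥ srcVec (tensVec y x') 0 0 (tensVec x x') (tensVec x y') 0 = 0 := by
  have hrow1 : tensVec (e1.Dinf *ᵥ e1.B1 *ᵥ y) (e2.B1 *ᵥ e2.A0 *ᵥ x') +
      (tensVec (e1.Dinf *ᵥ e1.A1 *ᵥ x) (e2.B1 *ᵥ e2.A0 *ᵥ x') +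
        tensVec x (e2.B1 *ᵥ e2.B0 *ᵥ y')) = 0 := by
    linear_combination h.tensVec_add_add_eq_zero h'
  have hrow4 : tensVec (e1.Binf *ᵥ e1.B1 *ᵥ y) x' + tensVec (e1.Binf *ᵥ e1.A1 *ᵥ x) x' = 0 := by
    linear_combination h.tensVec_add_eq_zero x'
  have hrow5 : tensVec (e1.Dinf *ᵥ e1.B1 *ᵥ y) (e2.D1 *ᵥ e2.A0 *ᵥ x') +
      (tensVec x x' + tensVec (e1.Dinf *ᵥ e1.A1 *ᵥ x) (e2.D1 *ᵥ e2.A0 *ᵥ x') +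
        tensVec x (e2.D1 *ᵥ e2.B0 *ᵥ y')) = 0 := by
    linear_combination h.tensVec_add_add_eq_tensVec h' + ZModModule.add_self (tensVec x x')
  rw [spliceD_mulVec_eq_zero_iff]
  simp [row1, row2, row3, row4, row5, row6, srcVec, add_mulVec, ← mulVec_mulVec,
    h.mulVec_fst_eq_zero, h'.mulVec_fst_eq_zero, hrow1, hrow4, hrow5]

end SplicingDatum

open SplicingDatum in
/-- an explicit element of the kernel of the splicing map `D`. -/
theorem stmt4 (e1 e2 : SplicingDatum)
    (z0_1 : Fin e1.ainf → F2) (z1_1 : Fin e1.a0 → F2) (zinf_1 : Fin e1.a1 → F2)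
    (z0_2 : Fin e2.ainf → F2) (z1_2 : Fin e2.a0 → F2) (zinf_2 : Fin e2.a1 → F2)
    (hz0_1 : e1.B1.mulVec z0_1 = 0) (hz1_1 : e1.Binf.mulVec z1_1 = 0)
    (hzinf_1 : e1.B0.mulVec zinf_1 = 0)
    (hz0_2 : e2.B1.mulVec z0_2 = 0) (hz1_2 : e2.Binf.mulVec z1_2 = 0)
    (hzinf_2 : e2.B0.mulVec zinf_2 = 0)
    (xinf_1 : Fin e1.ainf → F2) (yinf_1 : Fin e1.a1 → F2)
    (xinf_2 : Fin e2.ainf → F2) (yinf_2 : Fin e2.a1 → F2)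
    (hxinf_1 : e1.B1.mulVec xinf_1 = 0)
    (hyinf_1 : (e1.D1 + e1.A0).mulVec xinf_1 + e1.B0.mulVec yinf_1 = 0)
    (hxinf_2 : e2.B1.mulVec xinf_2 = 0)
    (hyinf_2 : (e2.D1 + e2.A0).mulVec xinf_2 + e2.B0.mulVec yinf_2 = 0)
    (x1_1 : Fin e1.a1 → F2) (y1_1 : Fin e1.a0 → F2)
    (x1_2 : Fin e2.a1 → F2) (y1_2 : Fin e2.a0 → F2)
    (hx1_1 : e1.B0.mulVec x1_1 = 0)
    (hy1_1 : (e1.D0 + e1.Ainf).mulVec x1_1 + e1.Binf.mulVec y1_1 = 0)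
    (hx1_2 : e2.B0.mulVec x1_2 = 0)
    (hy1_2 : (e2.D0 + e2.Ainf).mulVec x1_2 + e2.Binf.mulVec y1_2 = 0)
    (x0_1 : Fin e1.a0 → F2) (y0_1 : Fin e1.ainf → F2)
    (x0_2 : Fin e2.a0 → F2) (y0_2 : Fin e2.ainf → F2)
    (hx0_1 : e1.Binf.mulVec x0_1 = 0)
    (hy0_1 : (e1.Dinf + e1.A1).mulVec x0_1 + e1.B1.mulVec y0_1 = 0)
    (hx0_2 : e2.Binf.mulVec x0_2 = 0)
    (hy0_2 : (e2.Dinf + e2.A1).mulVec x0_2 + e2.B1.mulVec y0_2 = 0) :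
    (spliceD e1 e2).mulVec
      (Sum.elim (tensVec y0_1 xinf_2 + tensVec xinf_1 y0_2 + tensVec z0_1 z0_2)
      (Sum.elim (tensVec xinf_1 x0_2)
      (Sum.elim (tensVec yinf_1 x0_2 + tensVec x1_1 y1_2 + tensVec zinf_1 z1_2)
      (Sum.elim (tensVec x0_1 xinf_2)
      (Sum.elim (tensVec y1_1 x1_2 + tensVec x0_1 yinf_2 + tensVec z1_1 zinf_2)
        (tensVec x1_1 x1_2)))))) = 0 := by
  have hinf_1 := IsBalancedPair.of_fromBlocks_mul_fromBlocks_eq_one e1.inv1_left hxinf_1 hyinf_1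
  have hinf_2 := IsBalancedPair.of_fromBlocks_mul_fromBlocks_eq_one e2.inv1_left hxinf_2 hyinf_2
  have h1_1 := IsBalancedPair.of_fromBlocks_mul_fromBlocks_eq_one e1.inv0_left hx1_1 hy1_1
  have h1_2 := IsBalancedPair.of_fromBlocks_mul_fromBlocks_eq_one e2.inv0_left hx1_2 hy1_2
  have h0_1 := IsBalancedPair.of_fromBlocks_mul_fromBlocks_eq_one e1.invinf_left hx0_1 hy0_1
  have h0_2 := IsBalancedPair.of_fromBlocks_mul_fromBlocks_eq_one e2.invinf_left hx0_2 hy0_2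
  have hsum : spliceD e1 e2 *ᵥ
      (srcVec (tensVec y0_1 xinf_2) 0 0 (tensVec x0_1 xinf_2) (tensVec x0_1 yinf_2) 0 +
        srcVec (tensVec xinf_1 y0_2) (tensVec xinf_1 x0_2) (tensVec yinf_1 x0_2) 0 0 0 +
        srcVec 0 0 (tensVec x1_1 y1_2) 0 (tensVec y1_1 x1_2) (tensVec x1_1 x1_2) +
        srcVec (tensVec z0_1 z0_2) 0 (tensVec zinf_1 z1_2) 0 (tensVec z1_1 zinf_2) 0) = 0 := by
    simp only [mulVec_add, spliceD_mulVec_srcVec_of_zero_of_inf h0_1 hinf_2,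
      spliceD_mulVec_srcVec_of_inf_of_zero hinf_1 h0_2,
      spliceD_mulVec_srcVec_of_one_of_one h1_1 h1_2,
      spliceD_mulVec_srcVec_of_ker hz0_1 hz1_1 hzinf_1 hz0_2 hz1_2 hzinf_2, add_zero]
  convert hsum using 2
  simp only [srcVec, ← Sum.elim_add_add, add_zero, zero_add, add_comm (tensVec y1_1 x1_2)]
end
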